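/- Let t be a fixed positive integer and N = 9t. There exists a constant c' depending only on N such that for every alphabet size q, every q-ary 3-traceability code C of length N containing at least three codewords admits a subset X ⊆ C with |X| ≤ c'·q^t such that any two distinct codewords of C' = C \ X are at Hamming distance at least d(C)+1, where d(C) is the minimum distance of C (in particular this holds vacuously if C' has fewer than two codewords). -/

import Mathlib

/-- The descendant set of a set `D` of codewords: all words `x` such that in every
coordinate `i`, the symbol `x i` appears as the `i`-th symbol of some codeword of `D`. -/
def descSet {N q : ℕ} (D : Finset (Fin N → Fin q)) : Set (Fin N → Fin q) :=
  {x | ∀ i : Fin N, ∃ c ∈ D, x i = c i}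

/-- `C` is a `t`-traceability (t-TA) code: for every `D ⊆ C` with `|D| ≤ t` and every
`x ∈ desc(D)`, the minimum of `d(x,c)` over `c ∈ D` is strictly smaller than `d(x,y)`
for every `y ∈ C \ D`. -/
def IsTA {N q : ℕ} (t : ℕ) (C : Finset (Fin N → Fin q)) : Prop :=
  ∀ D : Finset (Fin N → Fin q), D ⊆ C → D.card ≤ t →
    ∀ x ∈ descSet D, ∃ c ∈ D, ∀ y ∈ C \ D, hammingDist x c < hammingDist x y

/-- The minimum Hamming distance of a code (junk value `0` if `|C| ≤ 1`). -/
noncomputable def minDist {N q : ℕ} (C : Finset (Fin N → Fin q)) : ℕ :=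
  sInf {d : ℕ | ∃ x ∈ C, ∃ y ∈ C, x ≠ y ∧ hammingDist x y = d}

/-!
A `w`-traceability code of length `N ≤ w² t` has at most `c · q ^ t` words, where `c` depends only
on `N`, `t` and `w`; for `w = 3` and `N = 9 t` one may therefore discard the whole code.

Fix a codeword `x`. Call a set `V` of coordinates flexible if, given any `w` words, some codeword
equals `x` on `V` and differs from all of these words everywhere outside `V`; call `T` rigid if no
flexible set other than the set of all coordinates contains it. If `T` is rigid and proper, some
`w` words witness that it is not flexible, and every codeword equal to `x` on `T` meets one of them
outside `T`. Branching over the word and the place bounds the number of codewords that are rigid on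
`T` and have a given restriction to `T`, so `O(q ^ t)` codewords are rigid on some `t`-set.

If `x` is rigid on no `t`-set, start with a proper flexible set `U₁` of maximal size and choose
greedily proper flexible sets `U₂, …, U_w`, each adding `t` new coordinates to the union `M` until
nothing is left. Flexibility gives codewords `y_j` equal to `x` on `U_j` and differing from `x` and,
outside `M`, from each other everywhere else. Let `z` equal `x` on `M`, and outside `M` copy each
`y_j` in at most `|M| - |U_j|` places; the sizes leave room for this because `N ≤ w² t`. Then `z` is
a descendant of the `y_j` which agrees with each `y_j` in at most `|M|` places and with `x` in at
least `|M|`, contradicting traceability.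
-/

open Finset Function

section Combinatorics

variable {ι : Type*}

lemma biUnion_univ_cons [DecidableEq ι] {k : ℕ} (A : Finset ι) (U : Fin k → Finset ι) :
    univ.biUnion (Fin.cons A U : Fin (k + 1) → Finset ι) = A ∪ univ.biUnion U := by
  ext i
  simp [Fin.exists_fin_succ]

variable [Fintype ι]

lemma exists_forall_card_fiber_le {κ : Type*} [Fintype κ] [DecidableEq κ] {b : κ → ℕ}
    (hb : Fintype.card ι ≤ ∑ j, b j) : ∃ p : ι → κ, ∀ j, #{i | p i = j} ≤ b j := by
  obtain ⟨g⟩ : Nonempty (ι ↪ Σ j, Fin (b j)) :=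
    Embedding.nonempty_of_card_le (by simpa using hb)
  refine ⟨fun i ↦ (g i).1, fun j ↦ ?_⟩
  calc #{i | (g i).1 = j} = #(({i | (g i).1 = j} : Finset ι).map g) := (card_map g).symm
    _ ≤ #((univ : Finset (Fin (b j))).map (Embedding.sigmaMk j)) := card_le_card fun a ha ↦ by
        obtain ⟨i, hi, rfl⟩ := mem_map.1 ha
        obtain rfl := (mem_filter.1 hi).2
        exact mem_map.2 ⟨(g i).2, mem_univ _, rfl⟩
    _ = b j := by simp

variable [DecidableEq ι] {𝒜 : Set (Finset ι)} {t : ℕ}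

lemma exists_mem_min_le_card_union (ht : t ≤ Fintype.card ι)
    (hcover : ∀ T : Finset ι, #T = t → ∃ V ∈ 𝒜, T ⊆ V) (S : Finset ι) :
    ∃ V ∈ 𝒜, min (Fintype.card ι) (#S + t) ≤ #(S ∪ V) := by
  obtain ⟨S', hSS', -, hS'⟩ := exists_subsuperset_card_eq (subset_univ S)
    (le_min (card_le_univ S) (Nat.le_add_right _ t)) (min_le_left _ _)
  have hdiff : #(S' \ S) ≤ t := by rw [card_sdiff_of_subset hSS']; omega
  obtain ⟨T, hT, -, hTt⟩ := exists_subsuperset_card_eq (subset_univ (S' \ S)) hdiff ht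
  obtain ⟨V, hV, hTV⟩ := hcover T hTt
  refine ⟨V, hV, hS' ▸ card_le_card ?_⟩
  rw [← union_sdiff_of_subset hSS']
  exact union_subset_union_right (hT.trans hTV)

lemma exists_forall_mem_min_le_card_union_biUnion (ht : t ≤ Fintype.card ι)
    (hcover : ∀ T : Finset ι, #T = t → ∃ V ∈ 𝒜, T ⊆ V) (S : Finset ι) (k : ℕ) :
    ∃ U : Fin k → Finset ι, (∀ j, U j ∈ 𝒜) ∧
      min (Fintype.card ι) (#S + k * t) ≤ #(S ∪ univ.biUnion U) := by
  induction k with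
  | zero => exact ⟨Fin.elim0, fun j ↦ j.elim0, by simp⟩
  | succ k ih =>
    obtain ⟨U, hU, hcard⟩ := ih
    obtain ⟨V, hV, hVcard⟩ := exists_mem_min_le_card_union ht hcover (S ∪ univ.biUnion U)
    refine ⟨Fin.cons V U, Fin.cases hV hU, ?_⟩
    rw [biUnion_univ_cons, union_comm V, ← union_assoc, add_one_mul]
    omega

lemma exists_forall_mem_card_add_sum_card_le {w : ℕ} (ht : t ≤ Fintype.card ι)
    (hw : Fintype.card ι ≤ w ^ 2 * t) (hcover : ∀ T : Finset ι, #T = t → ∃ V ∈ 𝒜, T ⊆ V) :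
    ∃ U : Fin w → Finset ι, (∀ j, U j ∈ 𝒜) ∧
      Fintype.card ι + ∑ j, #(U j) ≤ (w + 1) * #(univ.biUnion U) := by
  obtain _ | k := w
  · exact ⟨Fin.elim0, fun j ↦ j.elim0, by simpa using hw⟩
  obtain ⟨T, -, hT⟩ := exists_subset_card_eq (s := (univ : Finset ι)) ht
  obtain ⟨V, hV, hTV⟩ := hcover T hT
  obtain ⟨A, hA, hmax⟩ := 𝒜.toFinite.exists_maximalFor card 𝒜 ⟨V, hV⟩
  replace hmax : ∀ B ∈ 𝒜, #B ≤ #A := fun B hB ↦ (le_total #B #A).elim id (hmax hB)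
  have htA : t ≤ #A := hT ▸ (card_le_card hTV).trans (hmax V hV)
  obtain ⟨U, hU, hcard⟩ := exists_forall_mem_min_le_card_union_biUnion ht hcover A k
  have hmem : ∀ j, (Fin.cons A U : Fin (k + 1) → Finset ι) j ∈ 𝒜 := Fin.cases hA hU
  refine ⟨Fin.cons A U, hmem, ?_⟩
  rw [biUnion_univ_cons]
  set m := #(A ∪ univ.biUnion U)
  have hAm : #A ≤ m := card_le_card subset_union_left
  have hsum : ∑ j, #((Fin.cons A U : Fin (k + 1) → Finset ι) j) ≤ (k + 1) * #A := by
    simpa using sum_le_card_nsmul univ _ _ fun j _ ↦ hmax _ (hmem j)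
  rcases min_le_iff.1 hcard with hfull | hlarge
  · calc Fintype.card ι + ∑ j, #((Fin.cons A U : Fin (k + 1) → Finset ι) j)
        ≤ m + (k + 1) * m := by grw [hfull, hsum, hAm]
      _ = (k + 1 + 1) * m := by ring
  · calc Fintype.card ι + ∑ j, #((Fin.cons A U : Fin (k + 1) → Finset ι) j)
        ≤ (k + 1) ^ 2 * t + (k + 1) * #A := by grw [hw, hsum]
      _ = t + (k + 1) * #A + (k + 2) * (k * t) := by ring
      _ ≤ #A + (k + 1) * #A + (k + 2) * (k * t) := by gcongr
      _ = (k + 1 + 1) * (#A + k * t) := by ring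
      _ ≤ (k + 1 + 1) * m := by grw [hlarge]

end Combinatorics

section HammingDist

variable {ι α : Type*} [Fintype ι] [DecidableEq α]

lemma card_filter_eq_add_hammingDist (x y : ι → α) :
    #{i | x i = y i} + hammingDist x y = Fintype.card ι :=
  card_filter_add_card_filter_not _

lemma hammingDist_le_hammingDist_of_card_le {x y z : ι → α}
    (h : #{i | z i = y i} ≤ #{i | z i = x i}) : hammingDist z x ≤ hammingDist z y := by
  have hx := card_filter_eq_add_hammingDist z x
  have hy := card_filter_eq_add_hammingDist z y
  omega

variable {κ : Type*} [Fintype κ]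

lemma exists_forall_hammingDist_le_of_injective [DecidableEq ι] {x : ι → α} {y : κ → ι → α}
    {U : κ → Finset ι} (heq : ∀ j, Set.EqOn (y j) x (U j)) (hne : ∀ j, ∀ i ∉ U j, y j i ≠ x i)
    (hinj : ∀ i ∉ univ.biUnion U, Injective (y · i))
    (hcard : Fintype.card ι + ∑ j, #(U j) ≤ (Fintype.card κ + 1) * #(univ.biUnion U)) :
    ∃ z : ι → α, (∀ i, ∃ j, z i = y j i) ∧ ∀ j, hammingDist z x ≤ hammingDist z (y j) := by
  classical
  set M := univ.biUnion U
  have hUM : ∀ j, #(U j) ≤ #M := fun j ↦ card_le_card (subset_biUnion_of_mem U (mem_univ j))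
  have hroom : Fintype.card {i // i ∉ M} ≤ ∑ j, (#M - #(U j)) := by
    rw [sum_tsub_distrib _ fun j _ ↦ hUM j, Fintype.card_subtype_compl, Fintype.card_coe, sum_const,
      card_univ, smul_eq_mul]
    rw [add_one_mul] at hcard
    omega
  obtain ⟨p, hp⟩ := exists_forall_card_fiber_le hroom
  let z : ι → α := fun i ↦ if h : i ∈ M then x i else y (p ⟨i, h⟩) i
  have hzM : ∀ i ∈ M, z i = x i := fun i hi ↦ dif_pos hi
  have hzM' : ∀ i (hi : i ∉ M), z i = y (p ⟨i, hi⟩) i := fun i hi ↦ dif_neg hi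
  refine ⟨z, fun i ↦ ?_, fun j ↦ hammingDist_le_hammingDist_of_card_le ?_⟩
  · by_cases hi : i ∈ M
    · obtain ⟨j, -, hij⟩ := mem_biUnion.1 hi
      exact ⟨j, (hzM i hi).trans (heq j hij).symm⟩
    · exact ⟨_, hzM' i hi⟩
  · have hsub : ({i | z i = y j i} : Finset ι) ⊆
        U j ∪ ({i | p i = j} : Finset {i // i ∉ M}).map (.subtype _) := by
      intro i hi
      replace hi : z i = y j i := (mem_filter.1 hi).2
      by_cases hiM : i ∈ M
      · refine mem_union_left _ (by_contra fun hiU ↦ hne j i hiU ?_)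
        exact hi.symm.trans (hzM i hiM)
      · have hpj : p ⟨i, hiM⟩ = j := hinj i hiM ((hzM' i hiM).symm.trans hi)
        exact mem_union_right _ (mem_map.2 ⟨⟨i, hiM⟩, by simpa using hpj, rfl⟩)
    calc #{i | z i = y j i} ≤ #(U j) + #{i | p i = j} :=
          (card_le_card hsub).trans ((card_union_le _ _).trans_eq (by rw [card_map]))
      _ ≤ #M := by have := hp j; have := hUM j; omega
      _ ≤ #{i | z i = x i} := card_le_card fun i hi ↦ by simpa using hzM i hi

end HammingDist

section Flexible

variable {ι α : Type*}

/-- A set `V` of coordinates is `w`-flexible for the word `x` in the code `C` if, given any `w`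
words, some codeword equals `x` on `V` and differs from the given words at every coordinate
outside `V`. These codewords serve as the coalitions that refute traceability. -/
def IsFlexible (C : Finset (ι → α)) (w : ℕ) (x : ι → α) (V : Finset ι) : Prop :=
  ∀ F : Finset (ι → α), #F ≤ w → ∃ y ∈ C, Set.EqOn y x V ∧ ∀ f ∈ F, ∀ i ∉ V, y i ≠ f i

/-- A set `U` of coordinates is `w`-rigid for the word `x` in the code `C` if the only superset of
`U` that can be `w`-flexible for `x` is the set of all coordinates, for which flexibility says
nothing more than `x ∈ C`. Rigidity is the property that bounds the number of codewords. -/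
def IsRigid [Fintype ι] (C : Finset (ι → α)) (w : ℕ) (x : ι → α) (U : Finset ι) : Prop :=
  ∀ V, U ⊆ V → IsFlexible C w x V → V = univ

variable {C S : Finset (ι → α)} {w : ℕ} {x : ι → α} {U U' : Finset ι}

lemma exists_forall_eqOn_of_isFlexible {k : ℕ} (hk : k ≤ w) {U : Fin k → Finset ι}
    (hU : ∀ j, IsFlexible C w x (U j)) :
    ∃ y : Fin k → ι → α, (∀ j, y j ∈ C) ∧ (∀ j, Set.EqOn (y j) x (U j)) ∧
      (∀ j, ∀ i ∉ U j, y j i ≠ x i) ∧ ∀ i, (∀ j, i ∉ U j) → Injective (y · i) := by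
  classical
  induction k with
  | zero =>
    exact ⟨Fin.elim0, fun j ↦ j.elim0, fun j ↦ j.elim0, fun j ↦ j.elim0,
      fun _ _ ↦ injective_of_subsingleton _⟩
  | succ k ih =>
    obtain ⟨y, hyC, heq, hne, hinj⟩ := ih (by omega) fun j ↦ hU j.succ
    have hF : #(insert x (univ.image y)) ≤ w :=
      calc #(insert x (univ.image y)) ≤ #(univ.image y) + 1 := card_insert_le _ _
        _ ≤ k + 1 := by simpa using card_image_le (s := univ) (f := y)
        _ ≤ w := hk
    obtain ⟨y₀, hy₀C, heq₀, havoid⟩ := hU 0 _ hF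
    refine ⟨Fin.cons y₀ y, Fin.cases hy₀C hyC, Fin.cases heq₀ heq,
      Fin.cases (havoid x (mem_insert_self _ _)) hne, fun i hi ↦ ?_⟩
    have hcons : (fun j ↦ (Fin.cons y₀ y : Fin (k + 1) → ι → α) j i) =
        Fin.cons (y₀ i) (y · i) := Fin.comp_cons (fun v : ι → α ↦ v i) y₀ y
    rw [hcons, Fin.cons_injective_iff]
    refine ⟨?_, hinj i fun j ↦ hi j.succ⟩
    rintro ⟨j, hj⟩
    exact havoid (y j) (mem_insert_of_mem (mem_image_of_mem _ (mem_univ j))) i (hi 0) hj.symm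

variable [Fintype ι]

lemma IsRigid.mono (h : IsRigid C w x U) (hUU' : U ⊆ U') : IsRigid C w x U' :=
  fun V hV ↦ h V (hUU'.trans hV)

lemma IsRigid.exists_card_le_forall_exists_eq (h : IsRigid C w x U) (hU : U ≠ univ) :
    ∃ F : Finset (ι → α), #F ≤ w ∧
      ∀ y ∈ C, Set.EqOn y x U → ∃ f ∈ F, ∃ i ∉ U, y i = f i := by
  have hflex : ¬ IsFlexible C w x U := fun hflex ↦ hU (h U subset_rfl hflex)
  simpa only [IsFlexible, not_forall, not_exists, not_and, exists_prop, ne_eq, not_not] using hflex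

lemma card_le_pow_card_compl_of_isRigid [DecidableEq ι] (hSC : S ⊆ C)
    (hrigid : ∀ x ∈ S, IsRigid C w x U) (heq : ∀ x ∈ S, ∀ y ∈ S, Set.EqOn x y U) :
    #S ≤ (w * Fintype.card ι) ^ #Uᶜ := by
  classical
  induction hn : #Uᶜ generalizing U S with
  | zero =>
    obtain rfl : U = univ := by simpa using hn
    exact (card_le_one.2 fun x hx y hy ↦ funext fun i ↦ heq x hx y hy (by simp)).trans_eq
      (pow_zero _).symm
  | succ n ih =>
    obtain rfl | ⟨x, hx⟩ := S.eq_empty_or_nonempty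
    · simp
    have hU : U ≠ univ := by rintro rfl; simp at hn
    obtain ⟨F, hFw, hF⟩ := (hrigid x hx).exists_card_le_forall_exists_eq hU
    have hcover : S ⊆ (F ×ˢ Uᶜ).biUnion fun a ↦ {y ∈ S | y a.2 = a.1 a.2} := fun y hy ↦ by
      obtain ⟨f, hf, i, hi, hyf⟩ := hF y (hSC hy) (heq y hy x hx)
      exact mem_biUnion.2 ⟨(f, i), mk_mem_product hf (mem_compl.2 hi), mem_filter.2 ⟨hy, hyf⟩⟩
    have hbranch : ∀ a ∈ F ×ˢ Uᶜ, #{y ∈ S | y a.2 = a.1 a.2} ≤ (w * Fintype.card ι) ^ n := by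
      rintro ⟨f, i⟩ hfi
      have hi : i ∈ Uᶜ := (mem_product.1 hfi).2
      refine ih (U := insert i U) ((filter_subset _ _).trans hSC)
        (fun y hy ↦ (hrigid y (mem_filter.1 hy).1).mono (subset_insert _ _))
        (fun y hy y' hy' ↦ ?_) (by rw [compl_insert, card_erase_of_mem hi, hn]; rfl)
      rw [mem_filter] at hy hy'
      rw [coe_insert, Set.insert_eq, Set.eqOn_union, Set.eqOn_singleton]
      exact ⟨hy.2.trans hy'.2.symm, heq y hy.1 y' hy'.1⟩
    calc #S ≤ #(F ×ˢ Uᶜ) * (w * Fintype.card ι) ^ n :=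
          (card_le_card hcover).trans (card_biUnion_le_card_mul _ _ _ hbranch)
      _ ≤ w * Fintype.card ι * (w * Fintype.card ι) ^ n := by
          rw [card_product]
          gcongr
          exact card_le_univ _
      _ = (w * Fintype.card ι) ^ (n + 1) := (pow_succ' _ _).symm

variable [Fintype α]

lemma card_le_pow_mul_pow_of_isRigid [DecidableEq ι] (hSC : S ⊆ C)
    (hrigid : ∀ x ∈ S, IsRigid C w x U) :
    #S ≤ (w * Fintype.card ι) ^ #Uᶜ * Fintype.card α ^ #U := by
  classical
  have hfiber : ∀ r ∈ (univ : Finset (U → α)),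
      #{x ∈ S | U.restrict x = r} ≤ (w * Fintype.card ι) ^ #Uᶜ := fun r _ ↦
    card_le_pow_card_compl_of_isRigid ((filter_subset _ _).trans hSC)
      (fun x hx ↦ hrigid x (mem_filter.1 hx).1) fun x hx y hy i hi ↦
        congrFun ((mem_filter.1 hx).2.trans (mem_filter.1 hy).2.symm) ⟨i, hi⟩
  simpa using card_le_mul_card_image_of_maps_to (s := S)
    (fun x _ ↦ mem_univ (U.restrict x)) _ hfiber

lemma card_le_of_forall_exists_isRigid {t : ℕ} (h : ∀ x ∈ C, ∃ T, #T = t ∧ IsRigid C w x T) :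
    #C ≤ (Fintype.card ι).choose t * (w * Fintype.card ι) ^ (Fintype.card ι - t) *
      Fintype.card α ^ t := by
  classical
  have hcover : C ⊆ (univ.powersetCard t).biUnion fun T ↦ {x ∈ C | IsRigid C w x T} :=
    fun x hx ↦ by
      obtain ⟨T, hT, hrigid⟩ := h x hx
      exact mem_biUnion.2 ⟨T, mem_powersetCard_univ.2 hT, mem_filter.2 ⟨hx, hrigid⟩⟩
  refine (card_le_card hcover).trans ((card_biUnion_le_card_mul _ _
    ((w * Fintype.card ι) ^ (Fintype.card ι - t) * Fintype.card α ^ t) fun T hT ↦ ?_).trans_eq ?_)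
  · obtain rfl := mem_powersetCard_univ.1 hT
    rw [← card_compl]
    exact card_le_pow_mul_pow_of_isRigid (filter_subset _ _) fun x hx ↦ (mem_filter.1 hx).2
  · rw [card_powersetCard, card_univ, mul_assoc]

end Flexible

section Traceability

variable {N q w t : ℕ} {C : Finset (Fin N → Fin q)} {x : Fin N → Fin q}

lemma not_isTA_of_isFlexible (hx : x ∈ C) {U : Fin w → Finset (Fin N)}
    (hflex : ∀ j, IsFlexible C w x (U j)) (hproper : ∀ j, U j ≠ univ)
    (hcard : N + ∑ j, #(U j) ≤ (w + 1) * #(univ.biUnion U)) : ¬ IsTA w C := by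
  intro hTA
  obtain ⟨y, hyC, heq, hne, hinj⟩ := exists_forall_eqOn_of_isFlexible le_rfl hflex
  obtain ⟨z, hzdesc, hzdist⟩ := exists_forall_hammingDist_le_of_injective heq hne
    (fun i hi ↦ hinj i (by simpa using hi)) (by simpa using hcard)
  have hxy : ∀ j, y j ≠ x := fun j hj ↦
    hproper j (eq_univ_of_forall fun i ↦ by_contra fun hi ↦ hne j i hi (congrFun hj i))
  obtain ⟨c, hc, hlt⟩ := hTA (univ.image y) (by simpa [image_subset_iff] using hyC)
    (by simpa using card_image_le (s := univ) (f := y)) z (by simpa [descSet] using hzdesc)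
  obtain ⟨j, -, rfl⟩ := mem_image.1 hc
  exact (hlt x (by simpa [hx] using hxy)).not_ge (hzdist j)

lemma IsTA.exists_isRigid (hC : IsTA w C) (htN : t ≤ N) (hN : N ≤ w ^ 2 * t) (hx : x ∈ C) :
    ∃ T, #T = t ∧ IsRigid C w x T := by
  by_contra! hno
  have hcover : ∀ T : Finset (Fin N), #T = t →
      ∃ V ∈ {V | IsFlexible C w x V ∧ V ≠ univ}, T ⊆ V := fun T hT ↦ by
    simpa [IsRigid, and_comm, and_left_comm] using hno T hT
  obtain ⟨U, hU, hcard⟩ := exists_forall_mem_card_add_sum_card_le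
    (by simpa using htN) (by simpa using hN) hcover
  exact not_isTA_of_isFlexible hx (fun j ↦ (hU j).1) (fun j ↦ (hU j).2)
    (by simpa using hcard) hC

end Traceability

theorem stmt_8_general (w t N : ℕ) (htN : t ≤ N) (hN : N ≤ w ^ 2 * t) (q : ℕ)
    (C : Finset (Fin N → Fin q)) (hC : IsTA w C) :
    #C ≤ N.choose t * (w * N) ^ (N - t) * q ^ t := by
  simpa using card_le_of_forall_exists_isRigid fun x hx ↦ hC.exists_isRigid htN hN hx

/-- Let `t ≥ 1` and `N = 9t`. There is a constant `c'` depending only on `N` such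
that every `q`-ary 3-traceability code `C` of length `N` with at least three
codewords admits a subset `X ⊆ C` with `|X| ≤ c'·q^t` such that any two distinct
codewords of `C \ X` are at Hamming distance at least `d(C) + 1`. -/
theorem stmt_8 (t : ℕ) (ht : 1 ≤ t) (N : ℕ) (hN : N = 9 * t) :
    ∃ c' : ℕ, ∀ q : ℕ, ∀ C : Finset (Fin N → Fin q),
      IsTA 3 C → 3 ≤ C.card →
        ∃ X ⊆ C, X.card ≤ c' * q ^ t ∧
          ∀ x ∈ C \ X, ∀ y ∈ C \ X, x ≠ y →
            minDist C + 1 ≤ hammingDist x y := by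
  refine ⟨N.choose t * (3 * N) ^ (N - t), fun q C hC _ ↦ ⟨C, subset_rfl, ?_, by simp⟩⟩
  exact stmt_8_general 3 t N (by omega) (by omega) q C hC
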